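/- Let T be an almost steep rank-one transformation such that ∑_{n=0}^{∞} 1/r_n < ∞. Then T is not rationally weakly mixing: there is no measurable set F with 0 < μ(F) < ∞ such that for all measurable A, B ⊆ F, (1/a_n(F)) ∑_{k=0}^{n−1} |μ(A ∩ T^k B) − μ(A)μ(B) u_k(F)| → 0 as n → ∞. -/

import Mathlib

open MeasureTheory Filter Set Pointwise

/-- A rank-one cutting-and-stacking transformation of a subset `X ⊆ ℝ` (with Lebesgue
measure), given by columns `C n` consisting of `h n` levels (open intervals) of width `w n`,
with `pos n j` the left endpoint of the level of height `j` in column `C n`; column `C (n+1)`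
is obtained from `C n` by cutting into `r n ≥ 2` subcolumns of equal width, adding `s n k`
spacers above the `k`-th subcolumn, and stacking. -/
structure RankOne where
  X : Set ℝ
  T : ℝ ≃ᵐ ℝ
  r : ℕ → ℕ
  s : ℕ → ℕ → ℕ
  h : ℕ → ℕ
  w : ℕ → ℝ
  pos : ℕ → ℕ → ℝ
  hr : ∀ n, 2 ≤ r n
  h0 : h 0 = 1
  w0 : w 0 = 1
  pos0 : pos 0 0 = 0
  hrec : ∀ n, h (n + 1) = ∑ k ∈ Finset.range (r n), (h n + s n k)
  wrec : ∀ n, w (n + 1) = w n / (r n : ℝ)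
  hX : X = ⋃ n, ⋃ j < h n, Set.Ioo (pos n j) (pos n j + w n)
  disj : ∀ n, ∀ j < h n, ∀ j' < h n, j ≠ j' →
    Disjoint (Set.Ioo (pos n j) (pos n j + w n)) (Set.Ioo (pos n j') (pos n j' + w n))
  stack : ∀ n, ∀ j < h n, ∀ k < r n,
    pos (n + 1) ((∑ i ∈ Finset.range k, (h n + s n i)) + j) = pos n j + (k : ℝ) * w (n + 1)
  Tmap : ∀ n j, j + 1 < h n → ∀ x ∈ Set.Ioo (pos n j) (pos n j + w n),
    T x = x + (pos n (j + 1) - pos n j)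
  Tbij : Set.BijOn (⇑T) X X
  Tpres : MeasurePreserving (⇑T) (volume.restrict X) (volume.restrict X)

namespace RankOne

/-- The level of height `j` in column `C n`. -/
def lvl (S : RankOne) (n j : ℕ) : Set ℝ := Set.Ioo (S.pos n j) (S.pos n j + S.w n)

/-- The measure on the space: Lebesgue measure restricted to `X`. -/
noncomputable def μ (S : RankOne) : Measure ℝ := volume.restrict S.X

/-- The intrinsic weight sequence `u n F = μ(F ∩ TⁿF) / μ(F)²`. -/
noncomputable def u (S : RankOne) (F : Set ℝ) (n : ℕ) : ℝ :=
  (S.μ (F ∩ (⇑S.T)^[n] '' F)).toReal / (S.μ F).toReal ^ 2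

/-- `a n F = ∑_{k<n} u k F`. -/
noncomputable def a (S : RankOne) (F : Set ℝ) (n : ℕ) : ℝ :=
  ∑ k ∈ Finset.range n, S.u F k

/-- `T` is normal if spacers are added above the rightmost subcolumn infinitely often. -/
def Normal (S : RankOne) : Prop := ∀ m, ∃ n, m ≤ n ∧ 0 < S.s n (S.r n - 1)

/-- `T` grows exponentially: `2 s_{n, r_n - 1} ≥ h_{n+1}` for every `n`. -/
def ExpGrowing (S : RankOne) : Prop := ∀ n, S.h (n + 1) ≤ 2 * S.s n (S.r n - 1)

/-- `T` has a bounded number of cuts: `sup r_n < ∞`. -/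
def BoundedCuts (S : RankOne) : Prop := ∃ c, ∀ n, S.r n ≤ c

/-- `H n = {0} ∪ {∑_{k≤i} (h n + s n k) : 0 ≤ i < r n - 1}`. -/
def Hset (S : RankOne) (n : ℕ) : Finset ℕ :=
  insert 0 ((Finset.range (S.r n - 1)).image fun i => ∑ k ∈ Finset.range (i + 1), (S.h n + S.s n k))

/-- The set of heights in column `C N` of the descendants of the level of height `p`
in column `C j`: `D(J, N) = p + H j ⊕ H (j+1) ⊕ ⋯ ⊕ H (N-1)`. -/
def desc (S : RankOne) (j p : ℕ) : ℕ → Finset ℕ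
  | 0 => {p}
  | N + 1 => if N < j then {p} else desc S j p N + S.Hset N

/-- `M m`: the maximal height of a descendant of the unit interval `I` in column `C m`. -/
def M (S : RankOne) (m : ℕ) : ℕ := (S.desc 0 0 m).sup id

/-- The ergodic sum `S_n(1_F)(x) = ∑_{k<n} 1_F(T^k x)`. -/
noncomputable def birkhoff (S : RankOne) (F : Set ℝ) (n : ℕ) (x : ℝ) : ℝ :=
  ∑ k ∈ Finset.range n, Set.indicator F (fun _ => (1 : ℝ)) ((⇑S.T)^[k] x)

/-- `T` is rationally weakly mixing on `F`. -/
def RWMOn (S : RankOne) (F : Set ℝ) : Prop :=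
  MeasurableSet F ∧ 0 < S.μ F ∧ S.μ F ≠ ⊤ ∧
  ∀ A B : Set ℝ, MeasurableSet A → A ⊆ F → MeasurableSet B → B ⊆ F →
    Tendsto (fun n => (S.a F n)⁻¹ *
      ∑ k ∈ Finset.range n,
        |(S.μ (A ∩ (⇑S.T)^[k] '' B)).toReal - (S.μ A).toReal * (S.μ B).toReal * S.u F k|)
      atTop (nhds 0)

/-- `T` is rationally weakly mixing. -/
def RWM (S : RankOne) : Prop := ∃ F, S.RWMOn F

/-- `T` is rationally ergodic: some set `F` of positive finite measure satisfies a
Renyi inequality. -/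
def RatErgodic (S : RankOne) : Prop :=
  ∃ (F : Set ℝ) (c : ℝ), MeasurableSet F ∧ 0 < S.μ F ∧ S.μ F ≠ ⊤ ∧
    ∀ n, ∫ x in F, (S.birkhoff F n x) ^ 2 ∂S.μ ≤ c * (∫ x in F, S.birkhoff F n x ∂S.μ) ^ 2

/-- `T` is spectrally weakly mixing: every bounded measurable eigenfunction is a.e. constant. -/
def SpecWM (S : RankOne) : Prop :=
  ∀ (f : ℝ → ℂ) (z : ℂ), Measurable f → (∃ C, ∀ᵐ x ∂S.μ, ‖f x‖ ≤ C) →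
    (∀ᵐ x ∂S.μ, f (S.T x) = z * f x) → ∃ c : ℂ, ∀ᵐ x ∂S.μ, f x = c

/-- `T` is zero-type: `μ(A ∩ TⁿA) → 0` for all `A` of finite measure. -/
def ZeroType (S : RankOne) : Prop :=
  ∀ A : Set ℝ, MeasurableSet A → S.μ A ≠ ⊤ →
    Tendsto (fun n => S.μ (A ∩ (⇑S.T)^[n] '' A)) atTop (nhds 0)

/-- The `i`-th nonzero element of `H n` (for `i < r n - 1`): `e n i = ∑_{k ≤ i} (h n + s n k)`. -/
def e (S : RankOne) (n i : ℕ) : ℕ := ∑ k ∈ Finset.range (i + 1), (S.h n + S.s n k)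

/-- `T` is steep: listing the nonzero elements of `H 0`, then `H 1`, etc., as `t 1, t 2, …`,
each successive element is at least `4` times the previous one. -/
def Steep (S : RankOne) : Prop :=
  (∀ n i, i + 2 < S.r n → 4 * S.e n i ≤ S.e n (i + 1)) ∧
  (∀ n, 4 * S.e n (S.r n - 2) ≤ S.e (n + 1) 0)

/-- `T` is almost steep. -/
def AlmostSteep (S : RankOne) : Prop :=
  ∀ n, 3 ≤ S.r n ∧ S.s n 0 = 0 ∧ S.s n 1 = 1 ∧
    ∀ i, 2 ≤ i → i ≤ S.r n - 1 →
      4 * (∑ k ∈ Finset.range i, (S.h n + S.s n k)) ≤ ∑ k ∈ Finset.range (i + 1), (S.h n + S.s n k)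

/-- `A` is a finite union of levels of `T`. -/
def FinUnionLevels (S : RankOne) (A : Set ℝ) : Prop :=
  ∃ q : Finset (ℕ × ℕ), (∀ v ∈ q, v.2 < S.h v.1) ∧ A = ⋃ v ∈ q, S.lvl v.1 v.2

end RankOne

/-!
For a point `x` of column `C m` let `height m x` be the height of its level. Since `∑ 1/r_n < ∞`,
Borel–Cantelli shows that almost every point eventually avoids the first two subcolumns of every
column. When `x` lies in the `c`-th subcolumn of `C m` its height increases from `height m x` to
`offset m c + height m x`, and since the offsets with `c ≥ 2` at least double at each step, the sums
`offset m a + offset m b` with `a, b ≥ 2` are pairwise equal or at distance at least `2 * h m`.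
Hence a relation `height x₁ + height x₂ = height x₃ + height x₄` in a high column descends to lower
columns. In high columns `T^k` adds `k` to heights, so `T^k` displaces the column-`m` heights of any
two such points equally. If `A` and `B` consist of such points in two different levels of `C m`,
then no `k` has both `A ∩ T^k A` and `A ∩ T^k B` nonempty, whereas rational weak mixing would
provide such a `k`.
-/

theorem exists_measure_inter_pos {α ι : Type*} [Countable ι] [MeasurableSpace α] {ν : Measure α}
    {s : Set α} {t : ι → Set α} (hs : 0 < ν s) (hst : ∀ᵐ x ∂ν, x ∈ s → ∃ i, x ∈ t i) :
    ∃ i, 0 < ν (s ∩ t i) := by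
  apply exists_measure_pos_of_not_measure_iUnion_null
  have hae : s ≤ᵐ[ν] ⋃ i, s ∩ t i := by
    filter_upwards [hst] with x hx hxs
    obtain ⟨i, hi⟩ := hx hxs
    exact mem_iUnion.2 ⟨i, hxs, hi⟩
  exact (hs.trans_le (measure_mono_ae hae)).ne'

namespace RankOne

variable {S : RankOne}

/-! ### Offsets of subcolumns -/

/-- The height in column `C (m + 1)` at which the `c`-th subcolumn of column `C m` begins. -/
def offset (S : RankOne) (m c : ℕ) : ℕ := ∑ i ∈ Finset.range c, (S.h m + S.s m i)

/-- The growth condition that the argument extracts from almost steepness: from the third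
subcolumn on, the offsets at least double. The value `S.offset m (S.r m)` is the height of
`C (m + 1)`. -/
def DoublingOffsets (S : RankOne) : Prop :=
  ∀ m c, 2 ≤ c → c < S.r m → 2 * S.offset m c ≤ S.offset m (c + 1)

theorem offset_succ (S : RankOne) (m c : ℕ) :
    S.offset m (c + 1) = S.offset m c + (S.h m + S.s m c) :=
  Finset.sum_range_succ _ _

theorem offset_mono (S : RankOne) (m : ℕ) : Monotone (S.offset m) :=
  monotone_nat_of_le_succ fun c => by rw [offset_succ]; omega

theorem mul_h_le_offset (S : RankOne) (m c : ℕ) : c * S.h m ≤ S.offset m c := by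
  induction c with
  | zero => simp
  | succ c ih => rw [offset_succ, Nat.succ_mul]; omega

theorem h_succ (S : RankOne) (m : ℕ) : S.h (m + 1) = S.offset m (S.r m) := S.hrec m

theorem two_pow_le_h (S : RankOne) (m : ℕ) : 2 ^ m ≤ S.h m := by
  induction m with
  | zero => simp [S.h0]
  | succ m ih =>
    calc 2 ^ (m + 1) = 2 * 2 ^ m := by ring
      _ ≤ S.r m * S.h m := Nat.mul_le_mul (S.hr m) ih
      _ ≤ S.h (m + 1) := by rw [h_succ]; exact S.mul_h_le_offset m _

theorem offset_add_lt_h_succ {m c d : ℕ} (hd : d < S.h m) (hc : c < S.r m) :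
    S.offset m c + d < S.h (m + 1) := by
  have hmono := S.offset_mono m (Nat.succ_le_of_lt hc)
  rw [Nat.succ_eq_add_one, offset_succ] at hmono
  rw [h_succ]
  omega

theorem AlmostSteep.doublingOffsets (hS : S.AlmostSteep) : S.DoublingOffsets := by
  intro m c hc hcr
  have hfour : 4 * S.offset m c ≤ S.offset m (c + 1) := (hS m).2.2.2 c hc (by omega)
  omega

namespace DoublingOffsets

theorem two_mul_offset_le (hS : S.DoublingOffsets) {m c c' : ℕ} (hc : 2 ≤ c) (hcc' : c < c')
    (hc' : c' ≤ S.r m) : 2 * S.offset m c ≤ S.offset m c' :=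
  (hS m c hc (by omega)).trans (S.offset_mono m hcc')

theorem offset_add_h_le (hS : S.DoublingOffsets) {m c d : ℕ} (hc : 2 ≤ c) (hcr : c < S.r m)
    (hd : d < S.h m) : S.offset m c + d + S.h m ≤ S.h (m + 1) := by
  have hdouble := hS.two_mul_offset_le hc hcr le_rfl
  have htwo := (Nat.mul_le_mul_right (S.h m) hc).trans (S.mul_h_le_offset m c)
  rw [h_succ]
  omega

/-- The larger offset dominates the comparison; if the larger ones agree, the smaller ones
decide. -/
theorem offset_add_offset_separated_of_le (hS : S.DoublingOffsets) {m a b a' b' : ℕ}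
    (hb : 2 ≤ b) (hba : b ≤ a) (ha : a < S.r m)
    (hb' : 2 ≤ b') (hba' : b' ≤ a') (ha' : a' < S.r m) :
    S.offset m a + S.offset m b = S.offset m a' + S.offset m b' ∨
      S.offset m a + S.offset m b + 2 * S.h m ≤ S.offset m a' + S.offset m b' ∨
      S.offset m a' + S.offset m b' + 2 * S.h m ≤ S.offset m a + S.offset m b := by
  have hle := S.offset_mono m hba
  have hle' := S.offset_mono m hba'
  have htwo := (Nat.mul_le_mul_right (S.h m) hb).trans (S.mul_h_le_offset m b)
  have htwo' := (Nat.mul_le_mul_right (S.h m) hb').trans (S.mul_h_le_offset m b')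
  rcases lt_trichotomy a a' with haa' | rfl | haa'
  · have := hS.two_mul_offset_le (hb.trans hba) haa' ha'.le
    omega
  · rcases lt_trichotomy b b' with hbb' | rfl | hbb'
    · have := hS.two_mul_offset_le hb hbb' (hba'.trans ha'.le)
      omega
    · omega
    · have := hS.two_mul_offset_le hb' hbb' (hba.trans ha.le)
      omega
  · have := hS.two_mul_offset_le (hb'.trans hba') haa' ha.le
    omega

theorem offset_add_offset_separated (hS : S.DoublingOffsets) {m a b a' b' : ℕ}
    (ha : 2 ≤ a ∧ a < S.r m) (hb : 2 ≤ b ∧ b < S.r m)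
    (ha' : 2 ≤ a' ∧ a' < S.r m) (hb' : 2 ≤ b' ∧ b' < S.r m) :
    S.offset m a + S.offset m b = S.offset m a' + S.offset m b' ∨
      S.offset m a + S.offset m b + 2 * S.h m ≤ S.offset m a' + S.offset m b' ∨
      S.offset m a' + S.offset m b' + 2 * S.h m ≤ S.offset m a + S.offset m b := by
  wlog hba : b ≤ a generalizing a b
  · have := this hb ha (by omega)
    omega
  wlog hba' : b' ≤ a' generalizing a' b'
  · have := this hb' ha' (by omega)
    omega
  exact hS.offset_add_offset_separated_of_le hb.1 hba ha.2 hb'.1 hba' ha'.2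

end DoublingOffsets

/-! ### Widths and levels -/

theorem r_pos (S : RankOne) (m : ℕ) : (0 : ℝ) < S.r m := by
  exact_mod_cast zero_lt_two.trans_le (S.hr m)

theorem w_pos (S : RankOne) (m : ℕ) : 0 < S.w m := by
  induction m with
  | zero => simp [S.w0]
  | succ m ih => rw [S.wrec]; exact div_pos ih (S.r_pos m)

theorem r_mul_w_succ (S : RankOne) (m : ℕ) : (S.r m : ℝ) * S.w (m + 1) = S.w m := by
  rw [S.wrec, mul_div_cancel₀ _ (S.r_pos m).ne']

theorem w_le_pow (S : RankOne) (m : ℕ) : S.w m ≤ (1 / 2 : ℝ) ^ m := by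
  induction m with
  | zero => simp [S.w0]
  | succ m ih =>
    have htwo : (2 : ℝ) ≤ S.r m := by exact_mod_cast S.hr m
    have hmul := mul_le_mul_of_nonneg_right htwo (S.w_pos (m + 1)).le
    rw [r_mul_w_succ] at hmul
    rw [pow_succ]
    linarith

theorem tendsto_w (S : RankOne) : Tendsto S.w atTop (nhds 0) :=
  squeeze_zero (fun m => (S.w_pos m).le) S.w_le_pow
    (tendsto_pow_atTop_nhds_zero_of_lt_one (by norm_num) (by norm_num))

theorem isOpen_lvl (S : RankOne) (m d : ℕ) : IsOpen (S.lvl m d) := isOpen_Ioo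

theorem volume_lvl (S : RankOne) (m d : ℕ) : volume (S.lvl m d) = ENNReal.ofReal (S.w m) := by
  simp [lvl]

theorem mem_X_iff {x : ℝ} : x ∈ S.X ↔ ∃ m, ∃ d < S.h m, x ∈ S.lvl m d := by
  rw [S.hX]
  simp only [mem_iUnion, exists_prop, lvl]

theorem measurableSet_X (S : RankOne) : MeasurableSet S.X := by
  rw [S.hX]
  exact (isOpen_iUnion fun m => isOpen_biUnion fun d _ => S.isOpen_lvl m d).measurableSet

theorem eq_of_mem_lvl {m d d' : ℕ} {x : ℝ} (hd : d < S.h m) (hd' : d' < S.h m)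
    (hx : x ∈ S.lvl m d) (hx' : x ∈ S.lvl m d') : d = d' := by
  by_contra hne
  exact disjoint_left.1 (S.disj m d hd d' hd' hne) hx hx'

theorem iterate_mem_lvl {m d k : ℕ} {x : ℝ} (hk : d + k < S.h m) (hx : x ∈ S.lvl m d) :
    S.T^[k] x ∈ S.lvl m (d + k) := by
  induction k with
  | zero => exact hx
  | succ k ih =>
    have hxk := ih (by omega)
    rw [Function.iterate_succ_apply', S.Tmap m (d + k) (by omega) _ hxk]
    obtain ⟨hlow, hhigh⟩ := hxk
    rw [← add_assoc]
    constructor <;> linarith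

theorem lvl_succ_offset_add {m c d : ℕ} (hd : d < S.h m) (hc : c < S.r m) :
    S.lvl (m + 1) (S.offset m c + d) =
      Ioo (S.pos m d + c * S.w (m + 1)) (S.pos m d + (c + 1) * S.w (m + 1)) := by
  rw [lvl, offset, S.stack m d hd c hc, add_assoc, ← add_one_mul]

theorem lvl_succ_offset_add_subset {m c d : ℕ} (hd : d < S.h m) (hc : c < S.r m) :
    S.lvl (m + 1) (S.offset m c + d) ⊆ S.lvl m d := by
  have hcr : (c : ℝ) + 1 ≤ S.r m := by exact_mod_cast hc
  have hw := S.w_pos (m + 1)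
  rw [lvl_succ_offset_add hd hc, lvl, ← S.r_mul_w_succ m]
  exact Ioo_subset_Ioo (le_add_of_nonneg_right (by positivity)) (by gcongr)

/-- The left endpoints of the levels of all columns, where the open levels of a column fail to be
covered by those of the next one. -/
def endpoints (S : RankOne) : Set ℝ := range fun v : ℕ × ℕ => S.pos v.1 v.2

theorem volume_endpoints (S : RankOne) : volume S.endpoints = 0 :=
  (countable_range _).measure_zero _

theorem exists_mem_lvl_succ {m d : ℕ} {x : ℝ} (hd : d < S.h m) (hx : x ∈ S.lvl m d)
    (hxe : x ∉ S.endpoints) : ∃ c < S.r m, x ∈ S.lvl (m + 1) (S.offset m c + d) := by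
  have hw := S.w_pos (m + 1)
  set q := (x - S.pos m d) / S.w (m + 1) with hq
  have hxq : x = S.pos m d + q * S.w (m + 1) := by
    rw [hq, div_mul_cancel₀ _ hw.ne', add_sub_cancel]
  have hq0 : 0 ≤ q := div_nonneg (sub_nonneg.2 hx.1.le) hw.le
  have hqr : q < S.r m := by
    rw [hq, div_lt_iff₀ hw, r_mul_w_succ]
    linarith [hx.2]
  have hc : ⌊q⌋₊ < S.r m := (Nat.floor_lt hq0).2 hqr
  refine ⟨⌊q⌋₊, hc, ?_⟩
  have hne : S.pos m d + ⌊q⌋₊ * S.w (m + 1) ≠ x := by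
    rw [← S.stack m d hd _ hc]
    exact fun h => hxe ⟨(m + 1, _), h⟩
  have hle : S.pos m d + ⌊q⌋₊ * S.w (m + 1) ≤ x := by
    rw [hxq]
    gcongr
    exact Nat.floor_le hq0
  rw [lvl_succ_offset_add hd hc]
  refine ⟨lt_of_le_of_ne hle hne, ?_⟩
  rw [hxq]
  gcongr
  exact Nat.lt_floor_add_one q

/-! ### Descendants of a level -/

theorem Hset_eq_image_offset (S : RankOne) (m : ℕ) :
    S.Hset m = (Finset.range (S.r m)).image (S.offset m) := by
  have hr : S.r m = S.r m - 1 + 1 := by have := S.hr m; omega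
  rw [hr, Finset.range_add_one', Finset.image_insert, Finset.map_eq_image, Finset.image_image]
  rfl

theorem desc_self (S : RankOne) (n p : ℕ) : S.desc n p n = {p} := by
  cases n <;> simp [desc]

theorem desc_succ (S : RankOne) {n m : ℕ} (p : ℕ) (hnm : n ≤ m) :
    S.desc n p (m + 1) = S.desc n p m + S.Hset m := by
  rw [desc, if_neg hnm.not_gt]

theorem exists_mem_desc {n m p : ℕ} {x : ℝ} (hnm : n ≤ m) (hp : p < S.h n) (hx : x ∈ S.lvl n p)
    (hxe : x ∉ S.endpoints) : ∃ d ∈ S.desc n p m, d < S.h m ∧ x ∈ S.lvl m d := by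
  induction m, hnm using Nat.le_induction with
  | base => exact ⟨p, by simp [desc_self], hp, hx⟩
  | succ m hnm ih =>
    obtain ⟨d, hdesc, hd, hxd⟩ := ih
    obtain ⟨c, hc, hxc⟩ := exists_mem_lvl_succ hd hxd hxe
    refine ⟨S.offset m c + d, ?_, offset_add_lt_h_succ hd hc, hxc⟩
    rw [desc_succ S p hnm, Hset_eq_image_offset, add_comm (S.offset m c)]
    exact Finset.add_mem_add hdesc (Finset.mem_image_of_mem _ (Finset.mem_range.2 hc))

theorem card_desc_mul_w_le (S : RankOne) {n m : ℕ} (p : ℕ) (hnm : n ≤ m) :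
    ((S.desc n p m).card : ℝ) * S.w m ≤ S.w n := by
  induction m, hnm using Nat.le_induction with
  | base => simp [desc_self]
  | succ m hnm ih =>
    have hH : (S.Hset m).card ≤ S.r m := by
      rw [Hset_eq_image_offset]
      exact Finset.card_image_le.trans_eq (Finset.card_range _)
    have hcard : (S.desc n p (m + 1)).card ≤ (S.desc n p m).card * S.r m := by
      rw [desc_succ S p hnm]
      exact Finset.card_add_le.trans (Nat.mul_le_mul_left _ hH)
    have hw := S.w_pos (m + 1)
    calc ((S.desc n p (m + 1)).card : ℝ) * S.w (m + 1)
        ≤ ((S.desc n p m).card * S.r m) * S.w (m + 1) := by gcongr; exact_mod_cast hcard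
      _ = (S.desc n p m).card * S.w m := by rw [mul_assoc, r_mul_w_succ]
      _ ≤ S.w n := ih

/-! ### Points avoiding the first two subcolumns -/

/-- The part of column `C m` outside its first two subcolumns, where offsets are doubling. -/
def upperPart (S : RankOne) (m : ℕ) : Set ℝ :=
  ⋃ d < S.h m, ⋃ c ∈ Ico 2 (S.r m), S.lvl (m + 1) (S.offset m c + d)

/-- The points that avoid the first two subcolumns of every column from `C m` on. -/
def upperTail (S : RankOne) (m : ℕ) : Set ℝ := ⋂ j ≥ m, S.upperPart j

theorem mem_upperPart_iff {m : ℕ} {x : ℝ} :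
    x ∈ S.upperPart m ↔
      ∃ d < S.h m, ∃ c, (2 ≤ c ∧ c < S.r m) ∧ x ∈ S.lvl (m + 1) (S.offset m c + d) := by
  simp only [upperPart, mem_iUnion, exists_prop, mem_Ico]

theorem measurableSet_upperTail (S : RankOne) (m : ℕ) : MeasurableSet (S.upperTail m) :=
  .iInter fun _ => .iInter fun _ => IsOpen.measurableSet <|
    isOpen_biUnion fun _ _ => isOpen_biUnion fun _ _ => S.isOpen_lvl _ _

theorem mem_upperPart_of_mem_upperTail {m j : ℕ} {x : ℝ} (hx : x ∈ S.upperTail m) (hmj : m ≤ j) :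
    x ∈ S.upperPart j :=
  mem_iInter₂.1 hx j hmj

theorem upperTail_mono (S : RankOne) : Monotone S.upperTail := fun _ _ hmj =>
  biInter_subset_biInter_left fun _ hj => hmj.trans hj

theorem lvl_diff_upperPart_subset {n m p : ℕ} (hnm : n ≤ m) (hp : p < S.h n) :
    S.lvl n p \ S.upperPart m ⊆
      S.endpoints ∪ ⋃ d ∈ S.desc n p m, Ioo (S.pos m d) (S.pos m d + 2 * S.w (m + 1)) := by
  rintro x ⟨hx, hxu⟩
  by_contra hcon
  obtain ⟨hxe, hxd⟩ := not_or.1 hcon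
  obtain ⟨d, hdesc, hd, hxm⟩ := exists_mem_desc hnm hp hx hxe
  obtain ⟨c, hc, hxc⟩ := exists_mem_lvl_succ hd hxm hxe
  have hc2 : c < 2 := by
    by_contra! hc2
    exact hxu (mem_upperPart_iff.2 ⟨d, hd, c, ⟨hc2, hc⟩, hxc⟩)
  refine hxd (mem_iUnion₂.2 ⟨d, hdesc, hxm.1, ?_⟩)
  rw [lvl_succ_offset_add hd hc] at hxc
  have hc2' : (c : ℝ) + 1 ≤ 2 := by exact_mod_cast hc2
  calc x < S.pos m d + (c + 1) * S.w (m + 1) := hxc.2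
    _ ≤ S.pos m d + 2 * S.w (m + 1) := by gcongr; exact (S.w_pos _).le

theorem volume_lvl_diff_upperPart_le {n m p : ℕ} (hnm : n ≤ m) (hp : p < S.h n) :
    volume (S.lvl n p \ S.upperPart m) ≤ ENNReal.ofReal (2 * S.w n * (S.r m : ℝ)⁻¹) := by
  have hreal : ((S.desc n p m).card : ℝ) * (2 * S.w (m + 1)) ≤ 2 * S.w n * (S.r m : ℝ)⁻¹ :=
    calc ((S.desc n p m).card : ℝ) * (2 * S.w (m + 1))
        = 2 * ((S.desc n p m).card * S.w m) * (S.r m : ℝ)⁻¹ := by rw [S.wrec]; ring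
      _ ≤ 2 * S.w n * (S.r m : ℝ)⁻¹ := by gcongr; exact S.card_desc_mul_w_le p hnm
  calc volume (S.lvl n p \ S.upperPart m)
      ≤ volume (S.endpoints ∪
          ⋃ d ∈ S.desc n p m, Ioo (S.pos m d) (S.pos m d + 2 * S.w (m + 1))) :=
        measure_mono (lvl_diff_upperPart_subset hnm hp)
    _ ≤ ∑ d ∈ S.desc n p m, volume (Ioo (S.pos m d) (S.pos m d + 2 * S.w (m + 1))) := by
        refine (measure_union_le _ _).trans ?_
        rw [volume_endpoints, zero_add]
        exact measure_biUnion_finset_le _ _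
    _ = ENNReal.ofReal ((S.desc n p m).card * (2 * S.w (m + 1))) := by
        simp [ENNReal.ofReal_mul]
    _ ≤ ENNReal.ofReal (2 * S.w n * (S.r m : ℝ)⁻¹) := ENNReal.ofReal_le_ofReal hreal

theorem ae_mem_lvl_imp_exists_mem_upperTail (hsum : Summable fun n => (S.r n : ℝ)⁻¹) {n p : ℕ}
    (hp : p < S.h n) : ∀ᵐ x, x ∈ S.lvl n p → ∃ m, x ∈ S.upperTail m := by
  have hbound : Summable fun i => 2 * S.w n * (S.r (i + n) : ℝ)⁻¹ :=
    ((summable_nat_add_iff n).2 hsum).mul_left _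
  have hfinite : ∑' i, volume (S.lvl n p \ S.upperPart (i + n)) ≠ ⊤ :=
    ne_top_of_le_ne_top hbound.tsum_ofReal_ne_top <| ENNReal.tsum_le_tsum fun i =>
      volume_lvl_diff_upperPart_le (Nat.le_add_left n i) hp
  filter_upwards [ae_eventually_notMem hfinite] with x hx hxp
  obtain ⟨i, hi⟩ := eventually_atTop.1 hx
  refine ⟨i + n, mem_iInter₂.2 fun j hj => ?_⟩
  by_contra hxj
  refine hi (j - n) (by omega) ⟨hxp, ?_⟩
  rwa [Nat.sub_add_cancel (by omega)]

theorem ae_exists_mem_upperTail (hsum : Summable fun n => (S.r n : ℝ)⁻¹) :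
    ∀ᵐ x ∂S.μ, ∃ m, x ∈ S.upperTail m := by
  refine (ae_restrict_iff' S.measurableSet_X).2 ?_
  have hlvl : ∀ᵐ x, ∀ n p, p < S.h n → x ∈ S.lvl n p → ∃ m, x ∈ S.upperTail m :=
    ae_all_iff.2 fun n => ae_all_iff.2 fun p => ae_all_iff.2 fun hp =>
      ae_mem_lvl_imp_exists_mem_upperTail hsum hp
  filter_upwards [hlvl] with x hx hxX
  obtain ⟨n, p, hp, hxp⟩ := mem_X_iff.1 hxX
  exact hx n p hp hxp

/-! ### Heights -/

/-- The height of the level of column `C m` that contains `x`, with junk value `0` if there is no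
such level. -/
noncomputable def height (S : RankOne) (m : ℕ) (x : ℝ) : ℕ :=
  sInf {d | d < S.h m ∧ x ∈ S.lvl m d}

theorem height_eq {m d : ℕ} {x : ℝ} (hd : d < S.h m) (hx : x ∈ S.lvl m d) :
    S.height m x = d := by
  obtain ⟨hlt, hmem⟩ := Nat.sInf_mem (s := {d | d < S.h m ∧ x ∈ S.lvl m d}) ⟨d, hd, hx⟩
  exact eq_of_mem_lvl hlt hd hmem hx

theorem height_lt_and_mem_lvl_height {m : ℕ} {x : ℝ} (hx : x ∈ S.upperPart m) :
    S.height m x < S.h m ∧ x ∈ S.lvl m (S.height m x) := by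
  obtain ⟨d, hd, c, hc, hxc⟩ := mem_upperPart_iff.1 hx
  have hxd := lvl_succ_offset_add_subset hd hc.2 hxc
  rw [height_eq hd hxd]
  exact ⟨hd, hxd⟩

theorem mem_lvl_height_succ {m : ℕ} {x : ℝ} (hx : x ∈ S.upperPart m) :
    x ∈ S.lvl (m + 1) (S.height (m + 1) x) := by
  obtain ⟨d, hd, c, hc, hxc⟩ := mem_upperPart_iff.1 hx
  rwa [height_eq (offset_add_lt_h_succ hd hc.2) hxc]

theorem exists_height_succ_eq {m : ℕ} {x : ℝ} (hx : x ∈ S.upperPart m) :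
    ∃ c, (2 ≤ c ∧ c < S.r m) ∧ S.height (m + 1) x = S.offset m c + S.height m x := by
  obtain ⟨d, hd, c, hc, hxc⟩ := mem_upperPart_iff.1 hx
  refine ⟨c, hc, ?_⟩
  rw [height_eq hd (lvl_succ_offset_add_subset hd hc.2 hxc),
    height_eq (offset_add_lt_h_succ hd hc.2) hxc]

namespace DoublingOffsets

theorem height_succ_add_h_le (hS : S.DoublingOffsets) {m : ℕ} {x : ℝ} (hx : x ∈ S.upperPart m) :
    S.height (m + 1) x + S.h m ≤ S.h (m + 1) := by
  obtain ⟨c, hc, hsucc⟩ := exists_height_succ_eq hx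
  rw [hsucc]
  exact hS.offset_add_h_le hc.1 hc.2 (height_lt_and_mem_lvl_height hx).1

theorem height_iterate (hS : S.DoublingOffsets) {m k : ℕ} {x : ℝ} (hx : x ∈ S.upperPart m)
    (hk : k < S.h m) : S.height (m + 1) (S.T^[k] x) = S.height (m + 1) x + k := by
  have hxk : S.height (m + 1) x + k < S.h (m + 1) :=
    (Nat.add_lt_add_left hk _).trans_le (hS.height_succ_add_h_le hx)
  exact height_eq hxk (iterate_mem_lvl hxk (mem_lvl_height_succ hx))

theorem height_add_height_eq_of_succ (hS : S.DoublingOffsets) {m : ℕ} {x₁ x₂ x₃ x₄ : ℝ}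
    (h₁ : x₁ ∈ S.upperPart m) (h₂ : x₂ ∈ S.upperPart m)
    (h₃ : x₃ ∈ S.upperPart m) (h₄ : x₄ ∈ S.upperPart m)
    (heq : S.height (m + 1) x₁ + S.height (m + 1) x₂ =
      S.height (m + 1) x₃ + S.height (m + 1) x₄) :
    S.height m x₁ + S.height m x₂ = S.height m x₃ + S.height m x₄ := by
  obtain ⟨c₁, hc₁, hsucc₁⟩ := exists_height_succ_eq h₁
  obtain ⟨c₂, hc₂, hsucc₂⟩ := exists_height_succ_eq h₂
  obtain ⟨c₃, hc₃, hsucc₃⟩ := exists_height_succ_eq h₃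
  obtain ⟨c₄, hc₄, hsucc₄⟩ := exists_height_succ_eq h₄
  have hlt₁ := (height_lt_and_mem_lvl_height h₁).1
  have hlt₂ := (height_lt_and_mem_lvl_height h₂).1
  have hlt₃ := (height_lt_and_mem_lvl_height h₃).1
  have hlt₄ := (height_lt_and_mem_lvl_height h₄).1
  have hsep := hS.offset_add_offset_separated hc₁ hc₂ hc₃ hc₄
  omega

theorem height_add_height_eq_of_le (hS : S.DoublingOffsets) {m j : ℕ} {x₁ x₂ x₃ x₄ : ℝ}
    (h₁ : x₁ ∈ S.upperTail m) (h₂ : x₂ ∈ S.upperTail m)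
    (h₃ : x₃ ∈ S.upperTail m) (h₄ : x₄ ∈ S.upperTail m) (hmj : m ≤ j)
    (heq : S.height j x₁ + S.height j x₂ = S.height j x₃ + S.height j x₄) :
    S.height m x₁ + S.height m x₂ = S.height m x₃ + S.height m x₄ := by
  induction j, hmj using Nat.le_induction with
  | base => exact heq
  | succ j hmj ih =>
    exact ih <| hS.height_add_height_eq_of_succ
      (mem_upperPart_of_mem_upperTail h₁ hmj) (mem_upperPart_of_mem_upperTail h₂ hmj)
      (mem_upperPart_of_mem_upperTail h₃ hmj) (mem_upperPart_of_mem_upperTail h₄ hmj) heq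

theorem height_iterate_add_height_eq (hS : S.DoublingOffsets) {m k : ℕ} {x y : ℝ}
    (hx : x ∈ S.upperTail m) (hy : y ∈ S.upperTail m)
    (hkx : S.T^[k] x ∈ S.upperTail m) (hky : S.T^[k] y ∈ S.upperTail m) :
    S.height m (S.T^[k] x) + S.height m y = S.height m (S.T^[k] y) + S.height m x := by
  have hk : k < S.h (m + k) :=
    calc k ≤ m + k := Nat.le_add_left k m
      _ < 2 ^ (m + k) := Nat.lt_two_pow_self
      _ ≤ S.h (m + k) := S.two_pow_le_h _
  have hhigh : ∀ z ∈ S.upperTail m,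
      S.height (m + k + 1) (S.T^[k] z) = S.height (m + k + 1) z + k := fun z hz =>
    hS.height_iterate (mem_upperPart_of_mem_upperTail hz (Nat.le_add_right m k)) hk
  refine hS.height_add_height_eq_of_le hkx hy hky hx (j := m + k + 1) (by omega) ?_
  rw [hhigh x hx, hhigh y hy]
  ring

theorem disjoint_or_disjoint_iterate (hS : S.DoublingOffsets) {m d d' : ℕ} {A B : Set ℝ}
    (hd : d < S.h m) (hd' : d' < S.h m) (hne : d ≠ d')
    (hA : A ⊆ S.upperTail m ∩ S.lvl m d) (hB : B ⊆ S.upperTail m ∩ S.lvl m d') (k : ℕ) :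
    Disjoint A (S.T^[k] '' A) ∨ Disjoint A (S.T^[k] '' B) := by
  by_contra! hcon
  obtain ⟨_, hxA, x, hx, rfl⟩ := not_disjoint_iff.1 hcon.1
  obtain ⟨_, hyA, y, hy, rfl⟩ := not_disjoint_iff.1 hcon.2
  have heq := hS.height_iterate_add_height_eq (hA hx).1 (hB hy).1 (hA hxA).1 (hA hyA).1
  rw [height_eq hd (hA hxA).2, height_eq hd' (hB hy).2, height_eq hd (hA hyA).2,
    height_eq hd (hA hx).2] at heq
  omega

end DoublingOffsets

theorem exists_ne_lvl_inter_pos {m : ℕ} {G : Set ℝ} (hG : G ⊆ S.upperTail m) (hpos : 0 < S.μ G) :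
    ∃ j ≥ m, ∃ d < S.h j, ∃ d' < S.h j, d ≠ d' ∧
      0 < S.μ (G ∩ S.lvl j d) ∧ 0 < S.μ (G ∩ S.lvl j d') := by
  have hsmall : ∀ᶠ j in atTop, ENNReal.ofReal (S.w j) < S.μ G := by
    have hlim := ENNReal.tendsto_ofReal S.tendsto_w
    rw [ENNReal.ofReal_zero] at hlim
    exact hlim.eventually_lt_const hpos
  obtain ⟨j, hj, hmj⟩ := (hsmall.and (eventually_ge_atTop m)).exists
  have hcover : ∀ x ∈ G, ∃ d : Fin (S.h j), x ∈ S.lvl j d := fun x hx =>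
    have ⟨hlt, hmem⟩ := height_lt_and_mem_lvl_height (mem_upperPart_of_mem_upperTail (hG hx) hmj)
    ⟨⟨S.height j x, hlt⟩, hmem⟩
  obtain ⟨d, hd⟩ := exists_measure_inter_pos hpos (ae_of_all _ hcover)
  have hlvl : S.μ (S.lvl j d) < S.μ G :=
    ((Measure.restrict_apply_le _ _).trans_eq (S.volume_lvl j d)).trans_lt hj
  have hrest : 0 < S.μ (G \ S.lvl j d) := (tsub_pos_of_lt hlvl).trans_le le_measure_sdiff
  obtain ⟨d', hd'⟩ := exists_measure_inter_pos hrest (ae_of_all _ fun x hx => hcover x hx.1)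
  refine ⟨j, hmj, d, d.2, d', d'.2, fun hdd' => ?_, hd,
    hd'.trans_le (measure_mono (inter_subset_inter_left _ sdiff_subset))⟩
  simp [hdd'] at hd'

/-! ### Rational weak mixing -/

theorem u_nonneg (S : RankOne) (F : Set ℝ) (k : ℕ) : 0 ≤ S.u F k := by
  unfold u
  positivity

theorem a_pos {F : Set ℝ} (hF : 0 < S.μ F) (hF' : S.μ F ≠ ⊤) {n : ℕ} (hn : 0 < n) :
    0 < S.a F n := by
  have hμ : 0 < (S.μ F).toReal := ENNReal.toReal_pos hF.ne' hF'
  have hzero : 0 < S.u F 0 := by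
    simp only [u, Function.iterate_zero, image_id, inter_self]
    positivity
  exact hzero.trans_le <|
    Finset.single_le_sum (fun k _ => S.u_nonneg F k) (Finset.mem_range.2 hn)

theorem RWMOn.exists_iterate_inter_ne_zero {F A B C D : Set ℝ} (hF : S.RWMOn F)
    (hA : MeasurableSet A ∧ A ⊆ F ∧ 0 < S.μ A) (hB : MeasurableSet B ∧ B ⊆ F ∧ 0 < S.μ B)
    (hC : MeasurableSet C ∧ C ⊆ F ∧ 0 < S.μ C) (hD : MeasurableSet D ∧ D ⊆ F ∧ 0 < S.μ D) :
    ∃ k, S.μ (A ∩ S.T^[k] '' B) ≠ 0 ∧ S.μ (C ∩ S.T^[k] '' D) ≠ 0 := by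
  obtain ⟨-, hFpos, hFfin, hlim⟩ := hF
  by_contra! hnull
  have htoReal : ∀ E, MeasurableSet E ∧ E ⊆ F ∧ 0 < S.μ E → 0 < (S.μ E).toReal := fun E hE =>
    ENNReal.toReal_pos hE.2.2.ne' (measure_ne_top_of_subset hE.2.1 hFfin)
  set p := (S.μ A).toReal * (S.μ B).toReal
  set q := (S.μ C).toReal * (S.μ D).toReal
  have hmin : 0 < min p q := lt_min (mul_pos (htoReal A hA) (htoReal B hB))
    (mul_pos (htoReal C hC) (htoReal D hD))
  have hterm : ∀ k, min p q * S.u F k ≤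
      |(S.μ (A ∩ S.T^[k] '' B)).toReal - p * S.u F k| +
        |(S.μ (C ∩ S.T^[k] '' D)).toReal - q * S.u F k| := by
    intro k
    have hp := mul_le_mul_of_nonneg_right (min_le_left p q) (S.u_nonneg F k)
    have hq := mul_le_mul_of_nonneg_right (min_le_right p q) (S.u_nonneg F k)
    by_cases hAB : S.μ (A ∩ S.T^[k] '' B) = 0
    · rw [hAB, ENNReal.toReal_zero, zero_sub, abs_neg]
      exact le_add_of_le_of_nonneg (hp.trans (le_abs_self _)) (abs_nonneg _)
    · rw [hnull k hAB, ENNReal.toReal_zero, zero_sub, abs_neg]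
      exact le_add_of_nonneg_of_le (abs_nonneg _) (hq.trans (le_abs_self _))
  have hadd := (hlim A B hA.1 hA.2.1 hB.1 hB.2.1).add (hlim C D hC.1 hC.2.1 hD.1 hD.2.1)
  rw [add_zero] at hadd
  refine hmin.not_ge (ge_of_tendsto hadd ?_)
  filter_upwards [eventually_gt_atTop 0] with n hn
  rw [← mul_add, ← Finset.sum_add_distrib, inv_mul_eq_div, le_div_iff₀ (a_pos hFpos hFfin hn), a,
    Finset.mul_sum]
  exact Finset.sum_le_sum fun k _ => hterm k

end RankOne

theorem statement14_general (S : RankOne) (hS : S.DoublingOffsets)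
    (hsum : Summable fun n => (S.r n : ℝ)⁻¹) : ¬ S.RWM := by
  rintro ⟨F, hF⟩
  obtain ⟨m, hm⟩ := exists_measure_inter_pos hF.2.1
    ((RankOne.ae_exists_mem_upperTail hsum).mono fun _ hx _ => hx)
  obtain ⟨j, hmj, d, hd, d', hd', hne, hA, hB⟩ :=
    RankOne.exists_ne_lvl_inter_pos inter_subset_right hm
  have hpiece : ∀ i, MeasurableSet (F ∩ S.upperTail m ∩ S.lvl j i) ∧
      F ∩ S.upperTail m ∩ S.lvl j i ⊆ F ∧
      F ∩ S.upperTail m ∩ S.lvl j i ⊆ S.upperTail j ∩ S.lvl j i := fun i =>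
    ⟨(hF.1.inter (S.measurableSet_upperTail m)).inter (S.isOpen_lvl j i).measurableSet,
      fun _ hx => hx.1.1, fun _ hx => ⟨S.upperTail_mono hmj hx.1.2, hx.2⟩⟩
  obtain ⟨hAm, hAF, hAd⟩ := hpiece d
  obtain ⟨hBm, hBF, hBd⟩ := hpiece d'
  obtain ⟨k, hAA, hAB⟩ := hF.exists_iterate_inter_ne_zero
    ⟨hAm, hAF, hA⟩ ⟨hAm, hAF, hA⟩ ⟨hAm, hAF, hA⟩ ⟨hBm, hBF, hB⟩
  rcases hS.disjoint_or_disjoint_iterate hd hd' hne hAd hBd k with hdisj | hdisj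
  · exact hAA (by rw [hdisj.inter_eq, measure_empty])
  · exact hAB (by rw [hdisj.inter_eq, measure_empty])

/-- An almost steep rank-one transformation with `∑ 1/r_n < ∞` is not
rationally weakly mixing. -/
theorem statement14 (S : RankOne) (hst : S.AlmostSteep)
    (hsum : Summable fun n => ((S.r n : ℝ))⁻¹) :
    ¬ S.RWM :=
  statement14_general S hst.doublingOffsets hsum
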